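/- For every irrational real number θ, the intersection S_θ ∩ S_{−θ} equals {1}. -/

import Mathlib

/-- For an irrational `θ`, `Sθ θ` is the set of positive integers `q` such that
`⌈qθ⌉/q < ⌈q'θ⌉/q'` for every positive integer `q' < q`. -/
def Sθ (θ : ℝ) : Set ℕ :=
  {q | 0 < q ∧ ∀ q' : ℕ, 0 < q' → q' < q →
    (⌈(q : ℝ) * θ⌉ : ℝ) / (q : ℝ) < (⌈(q' : ℝ) * θ⌉ : ℝ) / (q' : ℝ)}

/-!
Let `q` lie in both sets with `qθ ∉ ℤ`. For `0 < n < q` the two membership conditions say that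
`⌊nθ⌋/n < ⌊qθ⌋/q < ⌈qθ⌉/q < ⌈nθ⌉/n`. The outer interval has length at most `1/n`, the inner one has
length `1/q`, and each of the two gaps between them is at least `1/(nq)`, so `n + 2 ≤ q`. This fails
for `n = q - 1`, which leaves only `q = 1`. If `qθ ∈ ℤ`, then `⌈qθ⌉/q = θ` is the smallest value
that `⌈nθ⌉/n` can take, and it is attained exactly when `nθ ∈ ℤ`.
-/

/-- The positive denominators of `θ`: the integers `q > 0` such that `θ = m / q` for some
integer `m`. -/
def denominators (θ : ℝ) : Set ℕ :=
  {q | 0 < q ∧ (q : ℝ) * θ ∈ Set.range ((↑) : ℤ → ℝ)}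

section

variable {θ : ℝ} {n q : ℕ}

theorem denominators_neg (θ : ℝ) : denominators (-θ) = denominators θ := by
  have range_neg (x : ℝ) : -x ∈ Set.range ((↑) : ℤ → ℝ) ↔ x ∈ Set.range ((↑) : ℤ → ℝ) :=
    (Int.castAddHom ℝ).range.neg_mem_iff
  simp only [denominators, mul_neg, range_neg]

theorem denominators_eq_empty_of_irrational (hθ : Irrational θ) : denominators θ = ∅ :=
  Set.eq_empty_of_forall_notMem fun _ ⟨hq, m, hm⟩ ↦ (hθ.natCast_mul hq.ne').ne_int m hm.symm

theorem mem_Sθ_iff :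
    q ∈ Sθ θ ↔ 0 < q ∧ ∀ n : ℕ, 0 < n → n < q → ⌈q * θ⌉ * (n : ℤ) < ⌈n * θ⌉ * q := by
  refine and_congr_right fun hq ↦ forall₃_congr fun n hn _ ↦ ?_
  rw [div_lt_div_iff₀ (Nat.cast_pos.2 hq) (Nat.cast_pos.2 hn)]
  norm_cast

theorem mem_Sθ_neg_iff :
    q ∈ Sθ (-θ) ↔ 0 < q ∧ ∀ n : ℕ, 0 < n → n < q → ⌊n * θ⌋ * (q : ℤ) < ⌊q * θ⌋ * n := by
  simp only [mem_Sθ_iff, mul_neg, Int.ceil_neg, neg_mul, neg_lt_neg_iff]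

theorem one_mem_Sθ (θ : ℝ) : 1 ∈ Sθ θ :=
  ⟨one_pos, fun _ _ _ ↦ by lia⟩

theorem add_two_le_of_mem_Sθ (hq : q ∈ Sθ θ) (hq_neg : q ∈ Sθ (-θ)) (hθ : q ∉ denominators θ)
    (hn : 0 < n) (hnq : n < q) : n + 2 ≤ q := by
  obtain ⟨hq_pos, h_ceil⟩ := mem_Sθ_iff.1 hq
  have upper_gap : ⌈q * θ⌉ * (n : ℤ) + 1 ≤ ⌈n * θ⌉ * q := h_ceil n hn hnq
  have lower_gap : ⌊n * θ⌋ * (q : ℤ) + 1 ≤ ⌊q * θ⌋ * n := (mem_Sθ_neg_iff.1 hq_neg).2 n hn hnq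
  have inner_length : ⌈q * θ⌉ = ⌊q * θ⌋ + 1 :=
    (Int.ceil_eq_floor_add_one_iff_notMem _).2 fun h ↦ hθ ⟨hq_pos, h⟩
  have outer_length : ⌈n * θ⌉ * (q : ℤ) ≤ (⌊n * θ⌋ + 1) * q :=
    mul_le_mul_of_nonneg_right (Int.ceil_le_floor_add_one _) (Int.natCast_nonneg q)
  rw [inner_length] at upper_gap
  zify
  linarith

theorem eq_one_or_mem_denominators_of_mem_Sθ (hq : q ∈ Sθ θ) (hq_neg : q ∈ Sθ (-θ)) :
    q = 1 ∨ q ∈ denominators θ := by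
  by_contra! ⟨hq_ne_one, hθ⟩
  have hq_pos : 0 < q := hq.1
  have : q - 1 + 2 ≤ q := add_two_le_of_mem_Sθ hq hq_neg hθ (by lia) (by lia)
  lia

theorem ceil_div_eq_of_mem_denominators (hq : q ∈ denominators θ) : (⌈q * θ⌉ : ℝ) / q = θ := by
  have hq_ne : (q : ℝ) ≠ 0 := Nat.cast_ne_zero.2 hq.1.ne'
  rw [(Int.ceil_eq_self_iff_mem _).2 hq.2, mul_div_cancel_left₀ _ hq_ne]

theorem isLeast_denominators_of_mem_Sθ (hq : q ∈ Sθ θ) (hqθ : q ∈ denominators θ) :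
    IsLeast (denominators θ) q := by
  refine ⟨hqθ, fun n hn ↦ not_lt.1 fun hnq ↦ (hq.2 n hn.1 hnq).ne ?_⟩
  rw [ceil_div_eq_of_mem_denominators hqθ, ceil_div_eq_of_mem_denominators hn]

theorem lt_ceil_div_of_notMem_denominators (hn : 0 < n) (hnθ : n ∉ denominators θ) :
    θ < (⌈n * θ⌉ : ℝ) / n := by
  rw [lt_div_iff₀' (Nat.cast_pos.2 hn)]
  exact (Int.le_ceil _).lt_of_ne fun h ↦ hnθ ⟨hn, _, h.symm⟩

theorem mem_Sθ_of_isLeast_denominators (hq : IsLeast (denominators θ) q) : q ∈ Sθ θ := by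
  refine ⟨hq.1.1, fun n hn hnq ↦ ?_⟩
  rw [ceil_div_eq_of_mem_denominators hq.1]
  exact lt_ceil_div_of_notMem_denominators hn fun h ↦ (hq.2 h).not_gt hnq

end

theorem Sθ_inter_neg_general (θ : ℝ) :
    Sθ θ ∩ Sθ (-θ) = {1} ∪ {q | IsLeast (denominators θ) q} := by
  ext q
  constructor
  · rintro ⟨hq, hq_neg⟩
    exact (eq_one_or_mem_denominators_of_mem_Sθ hq hq_neg).imp id
      (isLeast_denominators_of_mem_Sθ hq)
  · rintro (rfl | hq)
    · exact ⟨one_mem_Sθ θ, one_mem_Sθ (-θ)⟩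
    · refine ⟨mem_Sθ_of_isLeast_denominators hq, mem_Sθ_of_isLeast_denominators ?_⟩
      rwa [denominators_neg]

/-- For every irrational `θ`, `S_θ ∩ S_{-θ} = {1}`. -/
theorem Sθ_inter_neg (θ : ℝ) (hθ : Irrational θ) :
    Sθ θ ∩ Sθ (-θ) = {1} := by
  simp [Sθ_inter_neg_general, denominators_eq_empty_of_irrational hθ, IsLeast]
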